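/- Let κ be a field, r ≥ 1, and s = (s₁,…,s_d) a sequence of nonnegative integers with s₁+⋯+s_d = r. Then GL_r(κ) is the disjoint union over w ∈ S_{r,s} of the double cosets P_s a(w) B: every g ∈ GL_r(κ) can be written g = p · a(w) · b with p ∈ P_s, w ∈ S_{r,s}, b ∈ B, and the permutation w is uniquely determined by g. -/

import Mathlib

/-!
Send each row index to the dual of the label of the block containing it. This gives a monotone map
`c` on `Fin r`; `P_s` consists of the invertible matrices `p` with `p i j = 0` whenever `c i < c j`,
and `w ∈ S_{r,s}` says exactly that `w⁻¹` is the stable sorting permutation of `c ∘ w`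
(`symm_eq_sort_iff`). In particular `w ∈ S_{r,s}` is determined by `c ∘ w`.

*Existence.* For each column index `j`, among the vectors `g_j + ∑_{k > j} x_k g_k` choose one whose
first nonzero entry is as low as possible, in row `w j` say. Two columns cannot share this row, since
subtracting a multiple of the later vector would push the leading entry of the earlier one further
down. So `w` is a permutation and `g = p a(w) b` with `p`, `b` lower triangular (`exists_bruhat`).
Replacing `w` by `w'` with `w'⁻¹` the sorting permutation of `c ∘ w` changes `p` by a permutation
matrix preserving the blocks.

*Uniqueness.* If `p a(w) = a(w') b`, then `p (w' i) (w i) = b i i ≠ 0`, so `c (w i) ≤ c (w' i)`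
for all `i`; exchanging the roles gives `c ∘ w = c ∘ w'`.
-/

def blockStart {d : ℕ} (s : Fin d → ℕ) (b : Fin d) : ℕ :=
  ∑ j ∈ Finset.univ.filter (fun j => b < j), s j

def inBlock {d : ℕ} (s : Fin d → ℕ) (b : Fin d) (x : ℕ) : Prop :=
  blockStart s b ≤ x ∧ x < blockStart s b + s b

def sameBlock {d : ℕ} (s : Fin d → ℕ) (x y : ℕ) : Prop :=
  ∃ b, inBlock s b x ∧ inBlock s b y

/-- Membership in the parabolic subgroup `P_s ⊆ GL_r(κ)` of invertible block
lower triangular matrices for the block sizes `(s_d, …, s₁)` (top to bottom). -/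
def memP {κ : Type} [Field κ] {d n : ℕ} (s : Fin d → ℕ)
    (g : Matrix (Fin n) (Fin n) κ) : Prop :=
  IsUnit g ∧ ∀ b b' : Fin d, b' < b → ∀ i j : Fin n,
    inBlock s b i.val → inBlock s b' j.val → g i j = 0

/-- Membership in the Borel subgroup `B ⊆ GL_r(κ)` of invertible lower
triangular matrices. -/
def memB {κ : Type} [Field κ] {n : ℕ} (b : Matrix (Fin n) (Fin n) κ) : Prop :=
  IsUnit b ∧ ∀ i j : Fin n, i < j → b i j = 0

/-- The permutation matrix `a(w)` with `a(w)_{ij} = δ_{i, w(j)}`. -/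
def permMat (κ : Type) [Field κ] {r : ℕ} (w : Equiv.Perm (Fin r)) :
    Matrix (Fin r) (Fin r) κ :=
  Matrix.of fun i j => if i = w j then 1 else 0

/-- `w ∈ S_{r,s}`. -/
def memSrs {d r : ℕ} (s : Fin d → ℕ) (w : Equiv.Perm (Fin r)) : Prop :=
  ∀ i j : Fin r, sameBlock s i.val j.val → i < j → w.symm i < w.symm j

open OrderDual (toDual)

/-! ### Blocks -/

theorem blockStart_add_le {d : ℕ} (s : Fin d → ℕ) {b b' : Fin d} (h : b < b') :
    blockStart s b' + s b' ≤ blockStart s b := by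
  unfold blockStart
  rw [add_comm, ← Finset.sum_insert (by simp)]
  refine Finset.sum_le_sum_of_subset fun j hj => ?_
  simp only [Finset.mem_insert, Finset.mem_filter, Finset.mem_univ, true_and] at hj ⊢
  rcases hj with rfl | hj
  · exact h
  · exact h.trans hj

theorem lt_of_inBlock {d : ℕ} {s : Fin d → ℕ} {b b' : Fin d} (h : b < b') {x y : ℕ}
    (hx : inBlock s b x) (hy : inBlock s b' y) : y < x :=
  lt_of_lt_of_le hy.2 ((blockStart_add_le s h).trans hx.1)

theorem inBlock_unique {d : ℕ} {s : Fin d → ℕ} {b b' : Fin d} {x : ℕ}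
    (hx : inBlock s b x) (hy : inBlock s b' x) : b = b' := by
  rcases lt_trichotomy b b' with h | h | h
  · exact absurd (lt_of_inBlock h hx hy) (lt_irrefl _)
  · exact h
  · exact absurd (lt_of_inBlock h hy hx) (lt_irrefl _)

theorem exists_inBlock {d : ℕ} (s : Fin d → ℕ) {x : ℕ} (hx : x < ∑ b, s b) :
    ∃ b, inBlock s b x := by
  induction d with
  | zero => simp at hx
  | succ d ih =>
    have h0 : blockStart s 0 = ∑ j : Fin d, s j.succ := by
      unfold blockStart
      rw [Finset.sum_filter, Fin.sum_univ_succ]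
      simp
    have hsucc : ∀ b : Fin d, blockStart s b.succ = blockStart (fun j => s j.succ) b := by
      intro b
      unfold blockStart
      rw [Finset.sum_filter, Finset.sum_filter, Fin.sum_univ_succ]
      simp
    rw [Fin.sum_univ_succ] at hx
    by_cases h : x < ∑ j : Fin d, s j.succ
    · obtain ⟨b, hb⟩ := ih (fun j => s j.succ) h
      refine ⟨b.succ, ?_⟩
      unfold inBlock at hb ⊢
      rw [hsucc]
      exact hb
    · refine ⟨0, ?_⟩
      unfold inBlock
      rw [h0]
      omega

/-! ### Permutation matrices -/

theorem mul_permMat_apply {κ : Type} [Field κ] {r : ℕ} (w : Equiv.Perm (Fin r))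
    (p : Matrix (Fin r) (Fin r) κ) (i j : Fin r) : (p * permMat κ w) i j = p i (w j) := by
  simp [Matrix.mul_apply, permMat]

theorem permMat_mul_apply {κ : Type} [Field κ] {r : ℕ} (w : Equiv.Perm (Fin r))
    (b : Matrix (Fin r) (Fin r) κ) (i j : Fin r) :
    (permMat κ w * b) (w i) j = b i j := by
  simp [Matrix.mul_apply, permMat]

theorem permMat_mul {κ : Type} [Field κ] {r : ℕ} (u w : Equiv.Perm (Fin r)) :
    permMat κ u * permMat κ w = permMat κ (u * w) := by
  ext i j
  rw [mul_permMat_apply]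
  rfl

theorem isUnit_permMat {κ : Type} [Field κ] {r : ℕ} (w : Equiv.Perm (Fin r)) :
    IsUnit (permMat κ w) := by
  have h1 : permMat κ (1 : Equiv.Perm (Fin r)) = 1 := by
    ext i j
    rw [Matrix.one_apply]
    rfl
  exact IsUnit.of_mul_eq_one (permMat κ w⁻¹) (by rw [permMat_mul, mul_inv_cancel, h1])

/-! ### Lower triangular matrices -/

theorem inv_blockTriangular {κ : Type} [Field κ] {n : ℕ} {α : Type} [LinearOrder α]
    {f : Fin n → α} {b : Matrix (Fin n) (Fin n) κ} (hu : IsUnit b) (h : b.BlockTriangular f) :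
    b⁻¹.BlockTriangular f := by
  let := hu.invertible
  exact Matrix.blockTriangular_inv_of_blockTriangular h

theorem memB.inv {κ : Type} [Field κ] {n : ℕ} {b : Matrix (Fin n) (Fin n) κ} (h : memB b) :
    memB b⁻¹ :=
  ⟨(Matrix.isUnit_nonsing_inv_iff).2 h.1, inv_blockTriangular (f := toDual) h.1 h.2⟩

theorem memB_of_diag {κ : Type} [Field κ] {n : ℕ} {b : Matrix (Fin n) (Fin n) κ}
    (h : ∀ i j, i < j → b i j = 0) (hd : ∀ i, b i i ≠ 0) : memB b := by
  refine ⟨?_, h⟩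
  rw [Matrix.isUnit_iff_isUnit_det, Matrix.det_of_isLowerTriangular b h, isUnit_iff_ne_zero]
  exact Finset.prod_ne_zero_iff.2 fun i _ => hd i

theorem memB.diag_ne_zero {κ : Type} [Field κ] {n : ℕ} {b : Matrix (Fin n) (Fin n) κ}
    (h : memB b) (i : Fin n) : b i i ≠ 0 := by
  have hu := h.1
  rw [Matrix.isUnit_iff_isUnit_det, Matrix.det_of_isLowerTriangular b h.2, isUnit_iff_ne_zero] at hu
  exact Finset.prod_ne_zero_iff.1 hu i (Finset.mem_univ i)

theorem memB.mul {κ : Type} [Field κ] {n : ℕ} {a b : Matrix (Fin n) (Fin n) κ}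
    (ha : memB a) (hb : memB b) : memB (a * b) :=
  ⟨ha.1.mul hb.1, Matrix.BlockTriangular.mul (b := toDual) ha.2 hb.2⟩

/-! ### Existence for the Borel subgroup -/

/-- `x` is the coefficient vector of a combination `g_j + ∑_{k > j} x_k g_k` of columns of `g`
whose first nonzero entry is in row `l`. -/
def LeadsAt {κ : Type} [Field κ] {r : ℕ} (g : Matrix (Fin r) (Fin r) κ) (j : Fin r)
    (x : Fin r → κ) (l : Fin r) : Prop :=
  x j = 1 ∧ (∀ k, k < j → x k = 0) ∧ (∀ i, i < l → (g.mulVec x) i = 0) ∧ (g.mulVec x) l ≠ 0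

theorem exists_lead {r : ℕ} {κ : Type} [Field κ] (v : Fin r → κ) (hv : v ≠ 0) :
    ∃ l, (∀ i, i < l → v i = 0) ∧ v l ≠ 0 := by
  obtain ⟨l, hl, hmin⟩ := WellFounded.has_min (wellFounded_lt (α := Fin r)) {i | v i ≠ 0}
    (Function.ne_iff.1 hv)
  exact ⟨l, fun i hi => by_contra fun h => hmin i h hi, hl⟩

theorem mulVec_ne_zero {κ : Type} [Field κ] {r : ℕ} {g : Matrix (Fin r) (Fin r) κ}
    (hg : IsUnit g) {x : Fin r → κ} {j : Fin r} (hx : x j = 1) : g.mulVec x ≠ 0 := by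
  intro h
  have h0 : x = 0 := Matrix.mulVec_injective_of_isUnit hg (by simpa using h)
  simp [h0] at hx

/-- A combination with the lowest possible leading row. -/
theorem exists_best {κ : Type} [Field κ] {r : ℕ} {g : Matrix (Fin r) (Fin r) κ}
    (hg : IsUnit g) (j : Fin r) :
    ∃ x l, LeadsAt g j x l ∧ ∀ y m, LeadsAt g j y m → m ≤ l := by
  have hne : {l | ∃ x, LeadsAt g j x l}.Nonempty := by
    obtain ⟨l, h1, h2⟩ := exists_lead (g.mulVec (Pi.single j 1))
      (mulVec_ne_zero hg (j := j) (by simp))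
    exact ⟨l, Pi.single j 1, by simp, fun k hk => by simp [hk.ne], h1, h2⟩
  obtain ⟨l, ⟨x, hx⟩, hmax⟩ := Set.exists_max_image _ id (Set.toFinite _) hne
  exact ⟨x, l, hx, fun y m hy => hmax m ⟨y, hy⟩⟩

theorem exists_bruhat {κ : Type} [Field κ] {r : ℕ} {g : Matrix (Fin r) (Fin r) κ}
    (hg : IsUnit g) :
    ∃ (w : Equiv.Perm (Fin r)) (p b : Matrix (Fin r) (Fin r) κ),
      memB p ∧ memB b ∧ g = p * permMat κ w * b := by
  choose X l hX hmax using exists_best hg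
  have hne : ∀ j k, j < k → l j ≠ l k := by
    intro j k hjk hl
    obtain ⟨a1, a2, a3, a4⟩ := hX j
    obtain ⟨b1, b2, b3, b4⟩ := hX k
    -- The multiple `t` of the later vector cancels the common leading entry.
    set t := (g.mulVec (X j)) (l j) / (g.mulVec (X k)) (l k) with ht
    have hy : (X j - t • X k) j = 1 := by simp [a1, b2 j hjk]
    obtain ⟨m, m1, m2⟩ := exists_lead (g.mulVec (X j - t • X k)) (mulVec_ne_zero hg hy)
    have hm := hmax j (X j - t • X k) m
      ⟨hy, fun i hi => by simp [a2 i hi, b2 i (hi.trans hjk)], m1, m2⟩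
    apply m2
    rw [Matrix.mulVec_sub, Matrix.mulVec_smul]
    simp only [Pi.sub_apply, Pi.smul_apply, smul_eq_mul]
    rcases hm.lt_or_eq with h | h
    · rw [a3 m h, b3 m (hl ▸ h)]
      simp
    · rw [h, ht, hl, div_mul_cancel₀ _ b4, sub_self]
  have hinj : Function.Injective l := by
    intro j k h
    rcases lt_trichotomy j k with h' | h' | h'
    · exact absurd h (hne j k h')
    · exact h'
    · exact absurd h.symm (hne k j h')
  let w : Equiv.Perm (Fin r) := Equiv.ofBijective l (Finite.injective_iff_bijective.1 hinj)
  have hw : ∀ j, w j = l j := fun _ => rfl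
  let M : Matrix (Fin r) (Fin r) κ := Matrix.of fun k j => X j k
  have hM : memB M := memB_of_diag (fun k j h => (hX j).2.1 k h)
    (fun j => by simp [M, (hX j).1])
  have hgM : ∀ i j, (g * M) i j = (g.mulVec (X j)) i := fun i j => rfl
  let p : Matrix (Fin r) (Fin r) κ := Matrix.of fun i j => (g * M) i (w.symm j)
  have hlw : ∀ j, l (w.symm j) = j := fun j => w.apply_symm_apply j
  have hp : memB p := by
    refine memB_of_diag (fun i j h => ?_) (fun i => ?_)
    · simp only [p, Matrix.of_apply, hgM]
      exact (hX _).2.2.1 i (by rwa [hlw])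
    · simp only [p, Matrix.of_apply, hgM]
      have := (hX (w.symm i)).2.2.2
      rwa [hlw] at this
  refine ⟨w, p, M⁻¹, hp, hM.inv, ?_⟩
  have hpw : p * permMat κ w = g * M := by
    ext i j
    rw [mul_permMat_apply]
    simp [p]
  rw [hpw, Matrix.mul_assoc, Matrix.mul_nonsing_inv _ ((Matrix.isUnit_iff_isUnit_det _).1 hM.1),
    Matrix.mul_one]

/-! ### The parabolic subgroup and the coset representatives -/

/-- `c` sends a row index to the dual of the label of its block. Labels decrease from top to
bottom, so passing to the dual makes `c` monotone. -/
def IsBlockMap {d r : ℕ} (s : Fin d → ℕ) (c : Fin r → (Fin d)ᵒᵈ) : Prop :=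
  ∀ i : Fin r, inBlock s (OrderDual.ofDual (c i)) i.val

theorem IsBlockMap.monotone {d r : ℕ} {s : Fin d → ℕ} {c : Fin r → (Fin d)ᵒᵈ}
    (hc : IsBlockMap s c) : Monotone c := by
  intro i j hij
  by_contra h
  have := lt_of_inBlock (OrderDual.ofDual_lt_ofDual.2 (not_le.1 h)) (hc i) (hc j)
  exact absurd hij (not_le.2 this)

theorem IsBlockMap.sameBlock_iff {d r : ℕ} {s : Fin d → ℕ} {c : Fin r → (Fin d)ᵒᵈ}
    (hc : IsBlockMap s c) (i j : Fin r) : sameBlock s i.val j.val ↔ c i = c j := by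
  constructor
  · rintro ⟨b, hi, hj⟩
    exact OrderDual.ofDual.injective
      ((inBlock_unique (hc i) hi).trans (inBlock_unique hj (hc j)))
  · intro h
    exact ⟨_, hc i, h ▸ hc j⟩

theorem IsBlockMap.memP_iff {κ : Type} [Field κ] {d r : ℕ} {s : Fin d → ℕ}
    {c : Fin r → (Fin d)ᵒᵈ} (hc : IsBlockMap s c) (p : Matrix (Fin r) (Fin r) κ) :
    memP s p ↔ IsUnit p ∧ p.BlockTriangular (fun i => OrderDual.ofDual (c i)) := by
  refine and_congr_right fun _ => ⟨fun h i j hij => h _ _ hij i j (hc i) (hc j), ?_⟩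
  intro h b b' hb i j hi hj
  rw [inBlock_unique hi (hc i), inBlock_unique hj (hc j)] at hb
  exact h hb

theorem IsBlockMap.symm_eq_sort_iff {d r : ℕ} {s : Fin d → ℕ} {c : Fin r → (Fin d)ᵒᵈ}
    (hc : IsBlockMap s c) (w : Equiv.Perm (Fin r)) :
    w.symm = Tuple.sort (c ∘ w) ↔ memSrs s w := by
  rw [Tuple.eq_sort_iff]
  simp only [Function.comp_apply, Equiv.apply_symm_apply, memSrs, hc.sameBlock_iff]
  constructor
  · exact fun h i j hij hlt => h.2 i j hlt hij
  · refine fun h => ⟨?_, fun i j hlt hij => h i j hij hlt⟩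
    intro i j hij
    simpa using hc.monotone hij

/-- Every permutation `w` can be moved into `S_{r,s}` without changing `c ∘ w`. -/
theorem IsBlockMap.exists_memSrs {d r : ℕ} {s : Fin d → ℕ} {c : Fin r → (Fin d)ᵒᵈ}
    (hc : IsBlockMap s c) (w : Equiv.Perm (Fin r)) :
    ∃ w' : Equiv.Perm (Fin r), memSrs s w' ∧ c ∘ w' = c ∘ w := by
  have hsort : (c ∘ w) ∘ Tuple.sort (c ∘ w) = c := by
    have := Tuple.unique_monotone (f := c) (σ := w * Tuple.sort (c ∘ w)) (τ := 1)
      (Tuple.monotone_sort (c ∘ w)) hc.monotone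
    exact this
  have h : c ∘ (Tuple.sort (c ∘ w)).symm = c ∘ w := by
    funext i
    have := congrFun hsort ((Tuple.sort (c ∘ w)).symm i)
    simpa using this.symm
  refine ⟨(Tuple.sort (c ∘ w)).symm, ?_, h⟩
  rw [← hc.symm_eq_sort_iff, h, Equiv.symm_symm]

theorem IsBlockMap.le_of_eq {κ : Type} [Field κ] {d r : ℕ} {s : Fin d → ℕ}
    {c : Fin r → (Fin d)ᵒᵈ} (hc : IsBlockMap s c) {w w' : Equiv.Perm (Fin r)}
    {p b p' b' : Matrix (Fin r) (Fin r) κ} (hp : memP s p) (hb : memB b) (hp' : memP s p')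
    (hb' : memB b') (h : p * permMat κ w * b = p' * permMat κ w' * b') (i : Fin r) :
    c (w i) ≤ c (w' i) := by
  rw [hc.memP_iff] at hp hp'
  have hdet : IsUnit b.det := (Matrix.isUnit_iff_isUnit_det _).1 hb.1
  have hdet' : IsUnit p'.det := (Matrix.isUnit_iff_isUnit_det _).1 hp'.1
  have key : p'⁻¹ * p * permMat κ w = permMat κ w' * (b' * b⁻¹) := by
    calc p'⁻¹ * p * permMat κ w = p'⁻¹ * (p * permMat κ w * b) * b⁻¹ := by
          simp only [Matrix.mul_assoc, Matrix.mul_nonsing_inv _ hdet, Matrix.mul_one]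
      _ = permMat κ w' * (b' * b⁻¹) := by
          rw [h]
          simp only [← Matrix.mul_assoc, Matrix.nonsing_inv_mul _ hdet', Matrix.one_mul]
  have hent := congrFun (congrFun key (w' i)) i
  rw [mul_permMat_apply, permMat_mul_apply] at hent
  by_contra hlt
  apply (hb'.mul hb.inv).diag_ne_zero i
  rw [← hent]
  exact ((inv_blockTriangular hp'.1 hp'.2).mul hp.2) (OrderDual.ofDual_lt_ofDual.2 (not_le.1 hlt))

/-- Generalized Bruhat decomposition: `GL_r(κ)` is the disjoint union over
`w ∈ S_{r,s}` of the double cosets `P_s a(w) B`; the permutation `w` is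
uniquely determined by `g`. -/
theorem stmt10 {κ : Type} [Field κ] {r d : ℕ} (hr : 0 < r)
    (s : Fin d → ℕ) (hs : ∑ b, s b = r)
    (g : Matrix (Fin r) (Fin r) κ) (hg : IsUnit g) :
    ∃! w : Equiv.Perm (Fin r), memSrs s w ∧
      ∃ p b : Matrix (Fin r) (Fin r) κ,
        memP s p ∧ memB b ∧ g = p * permMat κ w * b := by
  have hblock : ∀ i : Fin r, ∃ b, inBlock s b i.val := fun i =>
    exists_inBlock s (by rw [hs]; exact i.isLt)
  choose β hβ using hblock
  obtain ⟨c, hc⟩ : ∃ c : Fin r → (Fin d)ᵒᵈ, IsBlockMap s c := ⟨fun i => toDual (β i), hβ⟩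
  obtain ⟨w, p, b, hp, hb, hgw⟩ := exists_bruhat hg
  obtain ⟨w', hw', hcw⟩ := hc.exists_memSrs w
  have hp' : memP s (p * permMat κ (w * w'⁻¹)) := by
    rw [hc.memP_iff]
    refine ⟨hp.1.mul (isUnit_permMat _), Matrix.BlockTriangular.mul ?_ ?_⟩
    · intro i j hij
      exact hp.2 i j (hc.monotone.reflect_lt (OrderDual.ofDual_lt_ofDual.1 hij))
    -- The permutation `w * w'⁻¹` preserves every block, because `c ∘ w = c ∘ w'`.
    · intro i j hij
      simp only [permMat, Matrix.of_apply]
      refine if_neg ?_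
      rintro rfl
      have h : c j = c ((w * w'⁻¹) j) := by
        simpa using congrFun hcw (w'⁻¹ j)
      exact (OrderDual.ofDual_lt_ofDual.1 hij).ne' h
  have hgw' : g = p * permMat κ (w * w'⁻¹) * permMat κ w' * b := by
    rw [Matrix.mul_assoc p, permMat_mul, inv_mul_cancel_right]
    exact hgw
  refine ⟨w', ⟨hw', _, b, hp', hb, hgw'⟩, ?_⟩
  rintro v ⟨hv, q, e, hq, he, hgv⟩
  have hcv : c ∘ v = c ∘ w' := funext fun i => le_antisymm
    (hc.le_of_eq hq he hp' hb (hgv.symm.trans hgw') i)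
    (hc.le_of_eq hp' hb hq he (hgw'.symm.trans hgv) i)
  rw [← hc.symm_eq_sort_iff] at hv hw'
  rw [← Equiv.symm_symm v, hv, hcv, ← hw', Equiv.symm_symm]
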